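/- Let (X,d) be a complete metric space that is doubling with constant D ∈ ℕ, let β ∈ (0,1), let S ⊆ X, and let a (β,β)-Schmidt subgame with target set S be given by data (ι, c, r, (T^i)) as in the context. If Player 1 has a pure strategy that guarantees δ ∈ ℝ in the non-overlapping Hausdorff dimension game associated with this subgame and target set S, then dim_H(S) ≥ δ. -/

import Mathlib

open Metric Set Filter
open scoped ENNReal Classical

/-- A tree of finite sequences: nonempty, prefix-closed, every position has a one-step
extension. -/
def IsTree {A : Type*} (T : Set (List A)) : Prop :=
  T.Nonempty ∧ (∀ p ∈ T, ∀ q : List A, q <+: p → q ∈ T) ∧ ∀ p ∈ T, ∃ a : A, p ++ [a] ∈ T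

/-- `X` is a doubling metric space with doubling constant `D`. -/
def IsDoublingWith (X : Type*) [PseudoMetricSpace X] (D : ℕ) : Prop :=
  ∀ (x : X) (r : ℝ), 0 < r → ∃ t : Finset X, t.card ≤ D ∧
    closedBall x r ⊆ ⋃ y ∈ t, closedBall y (r / 2)

variable {X : Type*} [MetricSpace X]

/-- `T` is a tree of centers for the `(β,β)`-Schmidt subgame with initial ball `B̄(c,ρ)`:
along every position, `B̄(y_k, β^(k+1)·ρ) ⊆ B̄(y_(k-1), β^k·ρ)` where `y₋₁ = c`. -/
def IsBetaSchmidtTree (β : ℝ) (c : X) (ρ : ℝ) (T : Set (List X)) : Prop :=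
  IsTree T ∧ ∀ p ∈ T, ∀ k : ℕ, k < p.length →
    closedBall (p.getD k c) (β ^ (k + 1) * ρ) ⊆
      if k = 0 then closedBall c ρ else closedBall (p.getD (k - 1) c) (β ^ k * ρ)

/-- The history `⟨p 0, …, p (n-1)⟩` of Player 2's choices. -/
def histList {X : Type*} (p : ℕ → List X) (n : ℕ) : List (List X) :=
  List.ofFn fun j : Fin n => p j

/-- `τ` is a legal pure strategy of Player 1 (with shrinking exponent `k`, on the tree `Ti`
with initial ball `B̄(c,ρ)`) in the associated non-overlapping Hausdorff dimension game:
along every consistent history, the offered set of positions is nonempty, consists of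
positions of `Ti` of length `(n+1)·k` extending the previously chosen position, and the
associated closed balls have pairwise disjoint interiors. -/
def Valid1 (β : ℝ) (c : X) (ρ : ℝ) (Ti : Set (List X)) (k : ℕ)
    (τ : List (List X) → Set (List X)) : Prop :=
  ∀ (p : ℕ → List X) (n : ℕ), (∀ j < n, p j ∈ τ (histList p j)) →
    (τ (histList p n)).Nonempty ∧
    (∀ q ∈ τ (histList p n), q ∈ Ti ∧ q.length = (n + 1) * k ∧ (n = 0 ∨ p (n - 1) <+: q)) ∧
    (τ (histList p n)).Pairwise fun q q' =>
      Disjoint (interior (closedBall (q.getLastD c) (β ^ ((n + 1) * k) * ρ)))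
        (interior (closedBall (q'.getLastD c) (β ^ ((n + 1) * k) * ρ)))

/-- The strategy `τ` of Player 1 guarantees `δ` in the non-overlapping Hausdorff dimension
game with target set `S`: every play consistent with `τ` has payoff at least `δ`, the
payoff being `liminf_N (1/N) Σ_{n<N} log|Aₙ| / (k·log(1/β))` if the intersection of the
chosen balls is contained in `S`, and `-1` otherwise. -/
noncomputable def Guarantees1 (β : ℝ) (c : X) (ρ : ℝ) (S : Set X) (k : ℕ)
    (τ : List (List X) → Set (List X)) (δ : ℝ) : Prop :=
  ∀ p : ℕ → List X, (∀ n : ℕ, p n ∈ τ (histList p n)) →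
    δ ≤ if (⋂ n : ℕ, closedBall ((p n).getLastD c) (β ^ ((n + 1) * k) * ρ)) ⊆ S then
          Filter.liminf (fun N : ℕ =>
            (1 / (N : ℝ)) * ∑ n ∈ Finset.range N,
              Real.log ((τ (histList p n)).ncard) / (k * Real.log (1 / β)))
            Filter.atTop
        else -1

section Plays

variable {Y : Type*}

/-- The finite histories of Player 2's choices that are consistent with the strategy `τ`. -/
inductive IsConsistent (τ : List (List Y) → Set (List Y)) : List (List Y) → Prop
  | nil : IsConsistent τ []
  | snoc (h : List (List Y)) (q : List Y) (hh : IsConsistent τ h) (hq : q ∈ τ h) :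
      IsConsistent τ (h ++ [q])

variable {τ : List (List Y) → Set (List Y)}

lemma isConsistent_append_singleton {h : List (List Y)} {q : List Y} :
    IsConsistent τ (h ++ [q]) ↔ IsConsistent τ h ∧ q ∈ τ h := by
  refine ⟨fun hc => ?_, fun hc => .snoc h q hc.1 hc.2⟩
  generalize hg : h ++ [q] = g at hc
  cases hc with
  | nil => simp at hg
  | snoc h' q' hh hq =>
    obtain ⟨rfl, hq'⟩ := List.append_inj' hg rfl
    obtain rfl : q = q' := by simpa using hq'
    exact ⟨hh, hq⟩

lemma IsConsistent.of_prefix {h h' : List (List Y)} (hc : IsConsistent τ h') (hp : h <+: h') :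
    IsConsistent τ h := by
  induction hc with
  | nil => rw [List.prefix_nil.1 hp]; exact .nil
  | snoc g q hg hq ih =>
    rcases List.prefix_concat_iff.1 hp with rfl | hp
    · exact .snoc g q hg hq
    · exact ih hp

lemma histList_succ (p : ℕ → List Y) (n : ℕ) : histList p (n + 1) = histList p n ++ [p n] := by
  unfold histList
  rw [List.ofFn_succ_last]
  simp

lemma histList_length (p : ℕ → List Y) (n : ℕ) : (histList p n).length = n := by
  simp [histList]

lemma histList_prefix (p : ℕ → List Y) {m n : ℕ} (hmn : m ≤ n) :
    histList p m <+: histList p n :=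
  Nat.le_induction List.prefix_rfl
    (fun n _ ih => ih.trans (by rw [histList_succ]; exact List.prefix_append _ _)) n hmn

lemma isConsistent_histList {p : ℕ → List Y} (hp : ∀ n, p n ∈ τ (histList p n)) (n : ℕ) :
    IsConsistent τ (histList p n) := by
  induction n with
  | zero => simpa [histList] using IsConsistent.nil
  | succ n ih => rw [histList_succ]; exact .snoc _ _ ih (hp n)

lemma histList_getD (h : List (List Y)) {n : ℕ} (hn : n ≤ h.length) :
    histList (fun j => h.getD j []) n = h.take n := by
  apply List.ext_getElem
  · simp [histList_length, hn]
  · intro i h1 h2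
    rw [histList_length] at h1
    simp [histList, List.getElem?_eq_getElem (h1.trans_le hn)]

lemma IsConsistent.getD_mem {h : List (List Y)} (hc : IsConsistent τ h) {j : ℕ}
    (hj : j < h.length) : h.getD j [] ∈ τ (h.take j) := by
  have h1 : IsConsistent τ (h.take (j + 1)) := hc.of_prefix (List.take_prefix _ _)
  rw [List.take_succ_eq_append_getElem hj, isConsistent_append_singleton] at h1
  rw [List.getD_eq_getElem _ _ hj]
  exact h1.2

/-- A strictly increasing sequence of consistent histories is realized by an infinite play. -/
lemma exists_play_of_seq (h : ℕ → List (List Y)) (hc : ∀ n, IsConsistent τ (h n))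
    (hp : ∀ n, h n <+: h (n + 1)) (hl : ∀ n, (h n).length < (h (n + 1)).length) :
    ∃ p : ℕ → List Y, (∀ n, p n ∈ τ (histList p n)) ∧ ∀ n, histList p (h n).length = h n := by
  have hmono : ∀ m n, m ≤ n → h m <+: h n := fun m n hmn =>
    Nat.le_induction List.prefix_rfl (fun n _ ih => ih.trans (hp n)) n hmn
  have hlen : ∀ n, n ≤ (h n).length := fun n => (strictMono_nat_of_lt_succ hl).le_apply
  have key : ∀ i m, i < (h m).length → (h (i + 1)).getD i [] = (h m).getD i [] := by
    intro i m him
    have hi : i < (h (i + 1)).length := hlen (i + 1)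
    rw [List.getD_eq_getElem _ _ him, List.getD_eq_getElem _ _ hi]
    rcases le_total m (i + 1) with hm | hm
    · exact ((hmono _ _ hm).getElem him).symm
    · exact (hmono _ _ hm).getElem hi
  have hist : ∀ m n, n ≤ (h m).length →
      histList (fun i => (h (i + 1)).getD i []) n = (h m).take n := by
    intro m n hn
    rw [← histList_getD (h m) hn]
    unfold histList
    congr 1
    funext j
    exact key _ _ (j.2.trans_le hn)
  refine ⟨fun i => (h (i + 1)).getD i [], fun n => ?_, fun n => ?_⟩
  · rw [hist (n + 1) n (by have := hlen (n + 1); omega)]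
    exact (hc (n + 1)).getD_mem (hlen (n + 1))
  · rw [hist n _ le_rfl, List.take_length]

/-- The probability that Player 2, choosing uniformly at each step, produces the history `h`. -/
noncomputable def playWeight (τ : List (List Y) → Set (List Y)) (h : List (List Y)) : ℝ :=
  ∏ i ∈ Finset.range h.length, ((τ (h.take i)).ncard : ℝ)⁻¹

lemma playWeight_append_singleton (h : List (List Y)) (q : List Y) :
    playWeight τ (h ++ [q]) = playWeight τ h * ((τ h).ncard : ℝ)⁻¹ := by
  unfold playWeight
  rw [List.length_append, List.length_singleton, Finset.prod_range_succ]
  congr 1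
  · refine Finset.prod_congr rfl fun i hi => ?_
    rw [List.take_append_of_le_length (Finset.mem_range.1 hi).le]
  · simp

lemma playWeight_nonneg (h : List (List Y)) : 0 ≤ playWeight τ h :=
  Finset.prod_nonneg fun _ _ => by positivity

lemma playWeight_histList (p : ℕ → List Y) (n : ℕ) :
    playWeight τ (histList p n) = ∏ i ∈ Finset.range n, ((τ (histList p i)).ncard : ℝ)⁻¹ := by
  induction n with
  | zero => simp [histList, playWeight]
  | succ n ih => rw [histList_succ, playWeight_append_singleton, ih, Finset.prod_range_succ]

lemma playWeight_pos (hne : ∀ h, IsConsistent τ h → (τ h).Nonempty)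
    (hfin : ∀ h, IsConsistent τ h → (τ h).Finite) {h : List (List Y)} (hc : IsConsistent τ h) :
    0 < playWeight τ h := by
  induction hc with
  | nil => simp [playWeight]
  | snoc h q hh hq ih =>
    rw [playWeight_append_singleton]
    have : 0 < (τ h).ncard := (Set.ncard_pos (hfin h hh)).2 (hne h hh)
    positivity

/-- The total weight of the histories in `V` that extend `h`. -/
noncomputable def weightBelow (τ : List (List Y) → Set (List Y)) (V : Set (List (List Y)))
    (h : List (List Y)) : ℝ≥0∞ :=
  ∑' v : List (List Y), {v | v ∈ V ∧ h <+: v}.indicator (fun v => .ofReal (playWeight τ v)) v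

lemma exists_weightBelow_lt (hne : ∀ h, IsConsistent τ h → (τ h).Nonempty)
    (hfin : ∀ h, IsConsistent τ h → (τ h).Finite) {V : Set (List (List Y))} {h : List (List Y)}
    (hc : IsConsistent τ h)
    (hlt : weightBelow τ V h < .ofReal (playWeight τ h)) :
    ∃ q ∈ τ h, weightBelow τ V (h ++ [q]) < .ofReal (playWeight τ (h ++ [q])) := by
  by_contra! hcon
  refine hlt.not_ge ?_
  have hpos : 0 < (τ h).ncard := (Set.ncard_pos (hfin h hc)).2 (hne h hc)
  calc ENNReal.ofReal (playWeight τ h)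
      = ∑ q ∈ (hfin h hc).toFinset, ENNReal.ofReal (playWeight τ (h ++ [q])) := by
        rw [← ENNReal.ofReal_sum_of_nonneg fun _ _ => playWeight_nonneg _]
        simp only [playWeight_append_singleton, Finset.sum_const, nsmul_eq_mul,
          ← Set.ncard_eq_toFinset_card (τ h) (hfin h hc)]
        congr 1
        field_simp
    _ ≤ ∑ q ∈ (hfin h hc).toFinset, weightBelow τ V (h ++ [q]) :=
        Finset.sum_le_sum fun q hq => hcon q ((hfin h hc).mem_toFinset.1 hq)
    _ = ∑' v, ∑ q ∈ (hfin h hc).toFinset,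
          {v | v ∈ V ∧ h ++ [q] <+: v}.indicator (fun v => .ofReal (playWeight τ v)) v :=
        (Summable.tsum_finsetSum fun _ _ => ENNReal.summable).symm
    _ ≤ weightBelow τ V h := by
        refine ENNReal.tsum_le_tsum fun v => ?_
        by_cases hv : ∃ q ∈ (hfin h hc).toFinset, v ∈ V ∧ h ++ [q] <+: v
        · obtain ⟨q, hq, hvV, hqv⟩ := hv
          rw [Finset.sum_eq_single_of_mem q hq]
          · rw [Set.indicator_of_mem (by exact ⟨hvV, hqv⟩),
              Set.indicator_of_mem (by exact ⟨hvV, (List.prefix_append _ _).trans hqv⟩)]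
          · intro q' _ hne'
            refine Set.indicator_of_notMem (fun hv' => hne' ?_) _
            have := (List.prefix_of_prefix_length_le hv'.2 hqv (by simp)).eq_of_length (by simp)
            simpa using this
        · push Not at hv
          rw [Finset.sum_eq_zero fun q hq => Set.indicator_of_notMem
            (fun hv' => hv q hq hv'.1 hv'.2) _]
          exact zero_le

/-- If the histories in `V` extending `u` have less weight than `u`, some play through `u`
avoids `V` from `u` onwards. -/
lemma exists_play_avoiding (hne : ∀ h, IsConsistent τ h → (τ h).Nonempty)
    (hfin : ∀ h, IsConsistent τ h → (τ h).Finite) {V : Set (List (List Y))} {u : List (List Y)}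
    (hu : IsConsistent τ u) (hlt : weightBelow τ V u < .ofReal (playWeight τ u)) :
    ∃ p : ℕ → List Y, (∀ n, p n ∈ τ (histList p n)) ∧ histList p u.length = u ∧
      ∀ n, u.length ≤ n → histList p n ∉ V := by
  let G := {h : List (List Y) //
    IsConsistent τ h ∧ weightBelow τ V h < .ofReal (playWeight τ h)}
  have hnot : ∀ h : G, h.1 ∉ V := by
    rintro ⟨h, hc, hl⟩ hV
    refine hl.not_ge ?_
    have := ENNReal.le_tsum (f := {v | v ∈ V ∧ h <+: v}.indicator
      (fun v => ENNReal.ofReal (playWeight τ v))) h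
    rwa [Set.indicator_of_mem (by exact ⟨hV, List.prefix_rfl⟩)] at this
  have hstep : ∀ h : G, ∃ q : List Y, q ∈ τ h.1 ∧
      weightBelow τ V (h.1 ++ [q]) < .ofReal (playWeight τ (h.1 ++ [q])) := fun h =>
    exists_weightBelow_lt hne hfin h.2.1 h.2.2
  choose q hq hqlt using hstep
  let next : G → G := fun h => ⟨h.1 ++ [q h], .snoc _ _ h.2.1 (hq h), hqlt h⟩
  let s : ℕ → G := fun n => next^[n] ⟨u, hu, hlt⟩
  have hs : ∀ n, (s (n + 1)).1 = (s n).1 ++ [q (s n)] := fun n => by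
    simp only [s, Function.iterate_succ_apply']
    rfl
  have hslen : ∀ n, (s n).1.length = u.length + n := by
    intro n
    induction n with
    | zero => rfl
    | succ n ih => rw [hs, List.length_append, ih, List.length_singleton, add_assoc]
  obtain ⟨p, hp, hph⟩ := exists_play_of_seq (fun n => (s n).1) (fun n => (s n).2.1)
    (fun n => by rw [hs]; exact List.prefix_append _ _) (fun n => by simp [hs])
  refine ⟨p, hp, by simpa [s] using hph 0, fun n hn => ?_⟩
  obtain ⟨m, rfl⟩ := Nat.exists_eq_add_of_le hn
  rw [← hslen m, hph m]
  exact hnot _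

end Plays

lemma IsDoublingWith.exists_cover {D : ℕ} (hD : IsDoublingWith X D) (x : X) {R : ℝ} (hR : 0 < R)
    (m : ℕ) : ∃ t : Finset X, t.card ≤ D ^ m ∧
      closedBall x R ⊆ ⋃ y ∈ t, closedBall y (R / 2 ^ m) := by
  induction m with
  | zero => exact ⟨{x}, by simp, by simp⟩
  | succ m ih =>
    obtain ⟨t, htc, ht⟩ := ih
    choose g hgc hg using fun y : X => hD y (R / 2 ^ m) (by positivity)
    refine ⟨t.biUnion g, ?_, fun z hz => ?_⟩
    · calc (t.biUnion g).card ≤ t.card * D := Finset.card_biUnion_le_card_mul _ _ _ fun y _ => hgc y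
        _ ≤ D ^ (m + 1) := by rw [pow_succ]; gcongr
    · obtain ⟨y, hy, hzy⟩ := mem_iUnion₂.1 (ht hz)
      obtain ⟨w, hw, hzw⟩ := mem_iUnion₂.1 (hg y hzy)
      refine mem_iUnion₂.2 ⟨w, Finset.mem_biUnion.2 ⟨y, hy, hw⟩, ?_⟩
      rwa [pow_succ, ← div_div]

/-- A separated family of points in a ball of a doubling space has bounded size. -/
lemma IsDoublingWith.encard_le {D : ℕ} (hD : IsDoublingWith X D) {A : Type*} (s : Set A)
    (f : A → X) (x : X) {R ε : ℝ} (hR : 0 < R) (m : ℕ) (hm : 2 * (R / 2 ^ m) < ε)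
    (hf : ∀ a ∈ s, f a ∈ closedBall x R)
    (hsep : s.Pairwise fun a b => ε ≤ dist (f a) (f b)) : s.encard ≤ (D : ℕ∞) ^ m := by
  obtain ⟨t, htc, ht⟩ := hD.exists_cover x hR m
  have hex : ∀ a ∈ s, ∃ y ∈ t, f a ∈ closedBall y (R / 2 ^ m) := fun a ha => by
    simpa using ht (hf a ha)
  have : Nonempty X := ⟨x⟩
  choose! g hgt hg using hex
  have hinj : Set.InjOn g s := by
    intro a ha b hb hab
    by_contra hne
    have h1 := hg a ha
    have h2 := hg b hb
    rw [← hab] at h2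
    have h3 := hsep ha hb hne
    rw [mem_closedBall] at h1 h2
    linarith [dist_triangle_right (f a) (f b) (g a)]
  calc s.encard ≤ (t : Set X).encard := Set.encard_le_encard_of_injOn (fun a ha => hgt a ha) hinj
    _ = t.card := Set.encard_coe_eq_coe_finsetCard t
    _ ≤ (D : ℕ∞) ^ m := by exact_mod_cast htc

section Balls

variable {β ρ : ℝ} {c : X} {Ti : Set (List X)} {k : ℕ} {τ : List (List X) → Set (List X)}

/-- The closed ball associated with a position of a Schmidt tree. -/
def positionBall (β : ℝ) (c : X) (ρ : ℝ) (p : List X) : Set X :=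
  closedBall (p.getLastD c) (β ^ p.length * ρ)

lemma IsBetaSchmidtTree.positionBall_subset (hT : IsBetaSchmidtTree β c ρ Ti) {p q : List X}
    (hq : q ∈ Ti) (hpq : p <+: q) : positionBall β c ρ q ⊆ positionBall β c ρ p := by
  obtain ⟨l, rfl⟩ := hpq
  induction l using List.reverseRecOn with
  | nil => simp
  | append_singleton l a ih =>
    rw [← List.append_assoc] at hq ⊢
    refine Subset.trans ?_ (ih (hT.1.2.1 _ hq _ (List.prefix_append _ _)))
    generalize p ++ l = w at hq
    have h := hT.2 _ hq w.length (by simp)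
    unfold positionBall
    rw [List.getLastD_concat]
    rcases List.eq_nil_or_concat' w with rfl | ⟨w, b, rfl⟩
    · simpa using h
    · simpa [List.getD_append, List.getD_append_right] using h

/-- The last position of the history `h`, or the empty position if `h` is empty. -/
abbrev lastPosition {Y : Type*} (h : List (List Y)) : List Y := h.getLastD []

lemma Valid1.of_isConsistent (hv : Valid1 β c ρ Ti k τ) {h : List (List X)}
    (hc : IsConsistent τ h) :
    (τ h).Nonempty ∧
    (∀ q ∈ τ h, q ∈ Ti ∧ q.length = (h.length + 1) * k ∧ lastPosition h <+: q) ∧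
    (τ h).Pairwise fun q q' => Disjoint (interior (positionBall β c ρ q))
      (interior (positionBall β c ρ q')) := by
  have H := hv (fun j => h.getD j []) h.length fun j hj => by
    rw [histList_getD h hj.le]
    exact hc.getD_mem hj
  rw [histList_getD h le_rfl, List.take_length] at H
  obtain ⟨hne, hext, hdisj⟩ := H
  refine ⟨hne, fun q hq => ⟨(hext q hq).1, (hext q hq).2.1, ?_⟩, fun q hq q' hq' hqq' => ?_⟩
  · rcases List.eq_nil_or_concat' h with rfl | ⟨g, a, rfl⟩
    · simp [lastPosition]
    · simpa [lastPosition, List.getD_append_right] using (hext q hq).2.2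
  · simp only [positionBall, (hext q hq).2.1, (hext q' hq').2.1]
    exact hdisj hq hq' hqq'

lemma Valid1.length_lastPosition (hv : Valid1 β c ρ Ti k τ) {h : List (List X)}
    (hc : IsConsistent τ h) : (lastPosition h).length = h.length * k := by
  cases hc with
  | nil => simp [lastPosition]
  | snoc h q hh hq =>
    simpa [lastPosition] using ((hv.of_isConsistent hh).2.1 q hq).2.1

lemma Valid1.positionBall_snoc_subset (hT : IsBetaSchmidtTree β c ρ Ti)
    (hv : Valid1 β c ρ Ti k τ) {h : List (List X)} (hc : IsConsistent τ h) {q : List X}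
    (hq : q ∈ τ h) :
    positionBall β c ρ q ⊆ positionBall β c ρ (lastPosition h) :=
  have H := (hv.of_isConsistent hc).2.1 q hq
  hT.positionBall_subset H.1 H.2.2

lemma Valid1.disjoint_interior (hT : IsBetaSchmidtTree β c ρ Ti) (hv : Valid1 β c ρ Ti k τ)
    {h h' : List (List X)} (hc : IsConsistent τ h) (hc' : IsConsistent τ h')
    (hlen : h.length = h'.length) (hne : h ≠ h') :
    Disjoint (interior (positionBall β c ρ (lastPosition h)))
      (interior (positionBall β c ρ (lastPosition h'))) := by
  induction hc generalizing h' with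
  | nil => exact absurd (List.length_eq_zero_iff.1 hlen.symm).symm hne
  | snoc g q hg hq ih =>
    cases hc' with
    | nil => simp at hlen
    | snoc g' q' hg' hq' =>
      simp only [lastPosition, List.getLastD_concat]
      by_cases hgg : g = g'
      · subst hgg
        exact (hv.of_isConsistent hg).2.2 hq hq' fun h => hne (by rw [h])
      · exact (ih hg' (by simpa using hlen) hgg).mono
          (interior_mono (hv.positionBall_snoc_subset hT hg hq))
          (interior_mono (hv.positionBall_snoc_subset hT hg' hq'))

lemma le_dist_of_disjoint_interior_closedBall {x y : X} {R : ℝ} (hR : 0 < R)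
    (h : Disjoint (interior (closedBall x R)) (interior (closedBall y R))) : R ≤ dist x y := by
  by_contra! hlt
  exact disjoint_left.1 h (ball_subset_interior_closedBall (mem_ball'.2 hlt))
    (ball_subset_interior_closedBall (mem_ball_self hR))

lemma Valid1.le_dist (hβ : 0 < β) (hρ : 0 < ρ) (hT : IsBetaSchmidtTree β c ρ Ti)
    (hv : Valid1 β c ρ Ti k τ) {h h' : List (List X)} (hc : IsConsistent τ h)
    (hc' : IsConsistent τ h') (hlen : h.length = h'.length) (hne : h ≠ h') :
    β ^ (h.length * k) * ρ ≤
      dist ((lastPosition h).getLastD c) ((lastPosition h').getLastD c) := by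
  have H := hv.disjoint_interior hT hc hc' hlen hne
  unfold positionBall at H
  rw [hv.length_lastPosition hc, hv.length_lastPosition hc', ← hlen] at H
  exact le_dist_of_disjoint_interior_closedBall (by positivity) H

lemma Valid1.finite {D : ℕ} (hD : IsDoublingWith X D) (hβ : 0 < β) (hρ : 0 < ρ)
    (hT : IsBetaSchmidtTree β c ρ Ti) (hv : Valid1 β c ρ Ti k τ) {h : List (List X)}
    (hc : IsConsistent τ h) : (τ h).Finite := by
  have hR : 0 < β ^ ((h.length + 1) * k) * ρ := by positivity
  obtain ⟨m, hm⟩ := pow_unbounded_of_one_lt (2 * ρ / (β ^ ((h.length + 1) * k) * ρ))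
    (one_lt_two (α := ℝ))
  refine Set.finite_of_encard_le_coe (k := D ^ m) ?_
  push_cast
  refine hD.encard_le (τ h) (fun q => q.getLastD c) c hρ m
    (ε := β ^ ((h.length + 1) * k) * ρ) ?_ (fun q hq => ?_) (fun q hq q' hq' hne => ?_)
  · rw [div_lt_iff₀ hR] at hm
    rw [← mul_div_assoc, div_lt_iff₀ (by positivity)]
    linarith
  · have h1 := hT.positionBall_subset ((hv.of_isConsistent hc).2.1 q hq).1 (List.nil_prefix)
    have h2 := h1 (mem_closedBall_self (by positivity))
    simpa [positionBall] using h2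
  · have := hv.le_dist hβ hρ hT (.snoc h q hc hq) (.snoc h q' hc hq') (by simp)
      (by simpa using hne)
    simpa [lastPosition] using this

/-- The balls chosen along a play have a common point. -/
lemma Valid1.nonempty_iInter [CompleteSpace X] (hβ : β ∈ Set.Ioo (0 : ℝ) 1) (hρ : 0 < ρ)
    (hk : 1 ≤ k) (hT : IsBetaSchmidtTree β c ρ Ti) (hv : Valid1 β c ρ Ti k τ)
    {p : ℕ → List X} (hp : ∀ n, p n ∈ τ (histList p n)) :
    (⋂ n : ℕ, closedBall ((p n).getLastD c) (β ^ ((n + 1) * k) * ρ)).Nonempty := by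
  have hβ0 := hβ.1
  have hball : ∀ n, positionBall β c ρ (p n) =
      closedBall ((p n).getLastD c) (β ^ ((n + 1) * k) * ρ) := fun n => by
    have := ((hv.of_isConsistent (isConsistent_histList hp n)).2.1 _ (hp n)).2.1
    rw [positionBall, this, histList_length]
  have hanti : Antitone fun n : ℕ => closedBall ((p n).getLastD c) (β ^ ((n + 1) * k) * ρ) := by
    refine antitone_nat_of_succ_le fun n => ?_
    have := hv.positionBall_snoc_subset hT (isConsistent_histList hp (n + 1)) (hp (n + 1))
    rwa [histList_succ, lastPosition, List.getLastD_concat, hball, hball] at this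
  refine Metric.nonempty_iInter_of_nonempty_biInter (fun n => isClosed_closedBall)
    (fun n => isBounded_closedBall) (fun N => ?_) ?_
  · refine ⟨(p N).getLastD c, mem_iInter₂.2 fun n hn => hanti hn ?_⟩
    exact mem_closedBall_self (by positivity)
  · have hlim : Tendsto (fun n : ℕ => 2 * (β ^ ((n + 1) * k) * ρ)) atTop (nhds 0) := by
      have h1 : Tendsto (fun n : ℕ => (n + 1) * k) atTop atTop :=
        (tendsto_add_atTop_nat 1).atTop_mul_const' (by omega)
      have h2 := (tendsto_pow_atTop_nhds_zero_of_lt_one hβ.1.le hβ.2).comp h1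
      simpa using (h2.mul_const ρ).const_mul 2
    exact squeeze_zero (fun n => diam_nonneg) (fun n => diam_closedBall (by positivity)) hlim

end Balls

/-- A geometric sequence contains a scale comparable to a given diameter. -/
lemma exists_geometric_scale {θ ρ s : ℝ} (hθ : θ ∈ Set.Ioo (0 : ℝ) 1) (hρ : 0 < ρ) (hs : 0 < s)
    (M : ℕ) {d ε : ℝ} (hd : 0 ≤ d) (hdM : d ≤ θ ^ M * ρ) (hε : 0 < ε) :
    ∃ n, M ≤ n ∧ d ≤ θ ^ n * ρ ∧ (θ ^ n * ρ) ^ s ≤ θ⁻¹ ^ s * d ^ s + ε := by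
  have hθ0 := hθ.1
  rcases hd.eq_or_lt with rfl | hd
  · have h1 : Tendsto (fun n : ℕ => (θ ^ n * ρ) ^ s) atTop (nhds 0) := by
      have := ((tendsto_pow_atTop_nhds_zero_of_lt_one hθ.1.le hθ.2).mul_const ρ).rpow_const
        (p := s) (Or.inr hs.le)
      simpa [Real.zero_rpow hs.ne'] using this
    obtain ⟨n, hn, hMn⟩ := ((h1.eventually_lt_const hε).and (eventually_ge_atTop M)).exists
    exact ⟨n, hMn, by positivity, by rw [Real.zero_rpow hs.ne']; linarith⟩
  · obtain ⟨n, hn, hn'⟩ := exists_nat_pow_near_of_lt_one (x := d / (θ ^ M * ρ)) (y := θ)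
      (by positivity) ((div_le_one (by positivity)).2 hdM) hθ.1 hθ.2
    rw [lt_div_iff₀ (by positivity)] at hn
    rw [div_le_iff₀ (by positivity)] at hn'
    refine ⟨M + n, by omega, by rw [pow_add]; linarith, ?_⟩
    have h2 : θ ^ (M + n) * ρ ≤ θ⁻¹ * d := by
      rw [inv_mul_eq_div, le_div_iff₀ hθ0]
      calc θ ^ (M + n) * ρ * θ = θ ^ (n + 1) * (θ ^ M * ρ) := by ring
        _ ≤ d := hn.le
    calc (θ ^ (M + n) * ρ) ^ s ≤ (θ⁻¹ * d) ^ s := Real.rpow_le_rpow (by positivity) h2 hs.le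
      _ = θ⁻¹ ^ s * d ^ s := Real.mul_rpow (by positivity) hd.le
      _ ≤ _ := by linarith

/-- If `S` has zero `s`-dimensional Hausdorff measure, it has covers by small sets with
arbitrarily small `s`-dimensional sum. -/
lemma exists_cover_of_hausdorffMeasure_eq_zero [MeasurableSpace X] [BorelSpace X] {s : ℝ}
    {S : Set X} (hS : MeasureTheory.Measure.hausdorffMeasure s S = 0) {R η : ℝ≥0∞} (hR : 0 < R)
    (hη : 0 < η) :
    ∃ t : ℕ → Set X, S ⊆ ⋃ n, t n ∧ (∀ n, ediam (t n) ≤ R) ∧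
      ∑' n, ⨆ (_ : (t n).Nonempty), ediam (t n) ^ s < η := by
  rw [MeasureTheory.Measure.hausdorffMeasure_apply] at hS
  have h1 := (le_iSup₂ (f := fun (R : ℝ≥0∞) (_ : 0 < R) => ⨅ (t : ℕ → Set X)
    (_ : S ⊆ ⋃ n, t n) (_ : ∀ n, ediam (t n) ≤ R),
      ∑' n, ⨆ (_ : (t n).Nonempty), ediam (t n) ^ s) R hR).trans_lt (hS.trans_lt hη)
  simp only [iInf_lt_iff] at h1
  obtain ⟨t, h2, h3, h4⟩ := h1
  exact ⟨t, h2, h3, h4⟩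

section Core

variable {β ρ : ℝ} {c : X} {Ti : Set (List X)} {k : ℕ} {τ : List (List X) → Set (List X)}

/-- At most `D ^ 3` histories of length `n` have a ball meeting a set whose diameter is at most
the radius of these balls. -/
lemma Valid1.encard_meeting_le {D : ℕ} (hD : IsDoublingWith X D) (hβ : 0 < β) (hρ : 0 < ρ)
    (hT : IsBetaSchmidtTree β c ρ Ti) (hv : Valid1 β c ρ Ti k τ) (n : ℕ) {U : Set X}
    (hU : ediam U ≤ .ofReal (β ^ (n * k) * ρ)) {V : Set (List (List X))}
    (hV : ∀ v ∈ V, IsConsistent τ v ∧ v.length = n ∧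
      (positionBall β c ρ (lastPosition v) ∩ U).Nonempty) :
    V.encard ≤ (D : ℕ∞) ^ 3 := by
  have hR : 0 < β ^ (n * k) * ρ := by positivity
  rcases V.eq_empty_or_nonempty with rfl | ⟨v₀, hv₀⟩
  · simp
  obtain ⟨x, -, hx⟩ := (hV v₀ hv₀).2.2
  refine hD.encard_le V (fun v => (lastPosition v).getLastD c) x
    (R := 2 * (β ^ (n * k) * ρ)) (ε := β ^ (n * k) * ρ) (by positivity) 3 (by linarith)
    (fun v hvV => ?_) (fun v hvV v' hvV' hne => ?_)
  · obtain ⟨hc, hlen, y, hy, hyU⟩ := hV v hvV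
    rw [positionBall, hv.length_lastPosition hc, hlen, mem_closedBall'] at hy
    have hyx : dist y x ≤ β ^ (n * k) * ρ := by
      rw [← ENNReal.ofReal_le_ofReal_iff hR.le, ← edist_dist]
      exact (edist_le_ediam_of_mem hyU hx).trans hU
    rw [mem_closedBall]
    linarith [dist_triangle ((lastPosition v).getLastD c) y x]
  · obtain ⟨hc, hlen, -⟩ := hV v hvV
    obtain ⟨hc', hlen', -⟩ := hV v' hvV'
    have := hv.le_dist hβ hρ hT hc hc' (hlen.trans hlen'.symm) hne
    rwa [hlen] at this

/-- If all plays end in a set of zero `s`-dimensional Hausdorff measure, then every consistent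
history has arbitrarily long extensions whose weight exceeds the `s`-th power of the radius. -/
lemma Valid1.exists_heavy_extension [CompleteSpace X] [MeasurableSpace X] [BorelSpace X] {D : ℕ}
    (hD : IsDoublingWith X D) (hβ : β ∈ Set.Ioo (0 : ℝ) 1) (hρ : 0 < ρ) (hk : 1 ≤ k)
    (hT : IsBetaSchmidtTree β c ρ Ti) (hv : Valid1 β c ρ Ti k τ) {S : Set X} {s : ℝ} (hs : 0 < s)
    (hS : MeasureTheory.Measure.hausdorffMeasure s S = 0)
    (hlim : ∀ p : ℕ → List X, (∀ n, p n ∈ τ (histList p n)) →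
      (⋂ n : ℕ, closedBall ((p n).getLastD c) (β ^ ((n + 1) * k) * ρ)) ⊆ S)
    {u : List (List X)} (hu : IsConsistent τ u) (M : ℕ) :
    ∃ v, IsConsistent τ v ∧ u <+: v ∧ M ≤ v.length ∧
      (β ^ (v.length * k) * ρ) ^ s < playWeight τ v := by
  have hβ0 := hβ.1
  have hne : ∀ h, IsConsistent τ h → (τ h).Nonempty := fun h hc => (hv.of_isConsistent hc).1
  have hfin : ∀ h, IsConsistent τ h → (τ h).Finite := fun h hc => hv.finite hD hβ0 hρ hT hc
  by_contra! hlight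
  have hθ : β ^ k ∈ Set.Ioo (0 : ℝ) 1 :=
    ⟨by positivity, pow_lt_one₀ hβ0.le hβ.2 (by omega)⟩
  have hpow : ∀ n, (β ^ k) ^ n * ρ = β ^ (n * k) * ρ := fun n => by rw [← pow_mul, mul_comm k]
  set M₀ := max M (u.length + 1)
  have hRpos : ∀ n : ℕ, 0 < β ^ (n * k) * ρ := fun n => by positivity
  set K : ℝ≥0∞ := .ofReal ((β ^ k)⁻¹ ^ s)
  obtain ⟨η, hη, hηlt⟩ := ENNReal.exists_nnreal_pos_mul_lt
    (a := (D : ℝ≥0∞) ^ 3 * (K + 1)) (b := .ofReal (playWeight τ u))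
    (ENNReal.mul_ne_top (by simp) (by simp [K]))
    (by simpa using playWeight_pos hne hfin hu)
  have hη' : (0 : ℝ≥0∞) < η := by exact_mod_cast hη
  obtain ⟨t, hcover, htdiam, htsum⟩ := exists_cover_of_hausdorffMeasure_eq_zero hS
    (R := .ofReal (β ^ (M₀ * k) * ρ)) (by simpa using hRpos M₀) hη'
  obtain ⟨ε, hε, hεsum⟩ := ENNReal.exists_pos_sum_of_countable hη'.ne' ℕ
  have hscale : ∀ j, ∃ n, M₀ ≤ n ∧ ((t j).Nonempty → ediam (t j) ≤ .ofReal (β ^ (n * k) * ρ) ∧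
      ENNReal.ofReal ((β ^ (n * k) * ρ) ^ s) ≤
        K * (⨆ (_ : (t j).Nonempty), ediam (t j) ^ s) + ε j) := by
    intro j
    by_cases hj : (t j).Nonempty
    · have hfinite : ediam (t j) ≠ ⊤ := ne_top_of_le_ne_top ENNReal.ofReal_ne_top (htdiam j)
      obtain ⟨n, hn, hdn, hns⟩ := exists_geometric_scale hθ hρ hs M₀
        (d := (ediam (t j)).toReal) (ε := ε j) ENNReal.toReal_nonneg
        (by rw [hpow]; exact ENNReal.toReal_le_of_le_ofReal (hRpos _).le (htdiam j))
        (by exact_mod_cast hε j)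
      rw [hpow] at hdn hns
      refine ⟨n, hn, fun _ => ⟨?_, ?_⟩⟩
      · rwa [← ENNReal.ofReal_toReal hfinite, ENNReal.ofReal_le_ofReal_iff (hRpos n).le]
      · rw [iSup_pos hj]
        refine (ENNReal.ofReal_le_ofReal hns).trans ?_
        rw [ENNReal.ofReal_add (by positivity) (by positivity),
          ENNReal.ofReal_mul (by positivity),
          ← ENNReal.ofReal_rpow_of_nonneg ENNReal.toReal_nonneg hs.le,
          ENNReal.ofReal_toReal hfinite, ENNReal.ofReal_coe_nnreal]
    · exact ⟨M₀, le_rfl, fun h => absurd h hj⟩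
  choose n hn hnt using hscale
  let V : ℕ → Set (List (List X)) := fun j => {v | IsConsistent τ v ∧ u <+: v ∧ v.length = n j ∧
    (positionBall β c ρ (lastPosition v) ∩ t j).Nonempty}
  have hVsum : ∀ j, ∑' v : V j, ENNReal.ofReal (playWeight τ v) ≤
      (D : ℝ≥0∞) ^ 3 * (K * (⨆ (_ : (t j).Nonempty), ediam (t j) ^ s) + ε j) := by
    intro j
    by_cases hj : (t j).Nonempty
    · have hcard : (V j).encard ≤ (D : ℕ∞) ^ 3 := hv.encard_meeting_le hD hβ0 hρ hT (n j)
        (hnt j hj).1 fun v hvV => ⟨hvV.1, hvV.2.2⟩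
      have hcard' : ((V j).encard : ℝ≥0∞) ≤ (D : ℝ≥0∞) ^ 3 := by
        exact_mod_cast ENat.toENNReal_le.2 hcard
      calc ∑' v : V j, ENNReal.ofReal (playWeight τ v)
          ≤ ∑' _ : V j, ENNReal.ofReal ((β ^ (n j * k) * ρ) ^ s) := by
            refine ENNReal.tsum_le_tsum fun ⟨v, hc, huv, hlen, _⟩ => ENNReal.ofReal_le_ofReal ?_
            have := hlight v hc huv (by rw [hlen]; exact (le_max_left _ _).trans (hn j))
            rwa [hlen] at this
        _ = (V j).encard * ENNReal.ofReal ((β ^ (n j * k) * ρ) ^ s) := ENNReal.tsum_set_const _ _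
        _ ≤ _ := mul_le_mul' hcard' (hnt j hj).2
    · have hVe : V j = ∅ := by
        simp only [V, Set.not_nonempty_iff_eq_empty.1 hj]
        simp
      rw [hVe]
      simp
  have hsmall : weightBelow τ (⋃ j, V j) u < .ofReal (playWeight τ u) := by
    calc weightBelow τ (⋃ j, V j) u
        ≤ ∑' v : ⋃ j, V j, ENNReal.ofReal (playWeight τ v) := by
          rw [tsum_subtype (⋃ j, V j) fun v => ENNReal.ofReal (playWeight τ v)]
          exact ENNReal.tsum_le_tsum fun v =>
            Set.indicator_le_indicator_of_subset (fun v hv => hv.1) (fun _ => zero_le) v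
      _ ≤ ∑' j, ∑' v : V j, ENNReal.ofReal (playWeight τ v) :=
          ENNReal.tsum_iUnion_le_tsum (fun v => ENNReal.ofReal (playWeight τ v)) V
      _ ≤ ∑' j, (D : ℝ≥0∞) ^ 3 * (K * (⨆ (_ : (t j).Nonempty), ediam (t j) ^ s) + ε j) :=
          ENNReal.tsum_le_tsum hVsum
      _ = (D : ℝ≥0∞) ^ 3 *
            (K * (∑' j, ⨆ (_ : (t j).Nonempty), ediam (t j) ^ s) + ∑' j, (ε j : ℝ≥0∞)) := by
          rw [ENNReal.tsum_mul_left, ENNReal.tsum_add, ENNReal.tsum_mul_left]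
      _ ≤ (D : ℝ≥0∞) ^ 3 * (K * η + η) := by gcongr
      _ = η * ((D : ℝ≥0∞) ^ 3 * (K + 1)) := by ring
      _ < _ := hηlt
  obtain ⟨p, hp, hpu, havoid⟩ := exists_play_avoiding hne hfin hu hsmall
  obtain ⟨x, hx⟩ := hv.nonempty_iInter hβ hρ hk hT hp
  obtain ⟨j, hj⟩ := mem_iUnion.1 (hcover (hlim p hp hx))
  have huj : u.length + 1 ≤ n j := (le_max_right _ _).trans (hn j)
  refine havoid (n j) (by omega) (mem_iUnion.2 ⟨j, isConsistent_histList hp _, ?_,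
    histList_length _ _, x, ?_, hj⟩)
  · rw [← hpu]
    exact histList_prefix p (by omega)
  · obtain ⟨m, hm⟩ : ∃ m, n j = m + 1 := ⟨n j - 1, by omega⟩
    rw [positionBall, hv.length_lastPosition (isConsistent_histList hp _), histList_length, hm,
      histList_succ, lastPosition, List.getLastD_concat]
    exact mem_iInter.1 hx m

/-- If all plays end in a set of zero `s`-dimensional Hausdorff measure, then along some play the
weight exceeds the `s`-th power of the radius infinitely often. -/
lemma Valid1.exists_play_frequently_heavy [CompleteSpace X] [MeasurableSpace X] [BorelSpace X]
    {D : ℕ} (hD : IsDoublingWith X D) (hβ : β ∈ Set.Ioo (0 : ℝ) 1) (hρ : 0 < ρ) (hk : 1 ≤ k)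
    (hT : IsBetaSchmidtTree β c ρ Ti) (hv : Valid1 β c ρ Ti k τ) {S : Set X} {s : ℝ} (hs : 0 < s)
    (hS : MeasureTheory.Measure.hausdorffMeasure s S = 0)
    (hlim : ∀ p : ℕ → List X, (∀ n, p n ∈ τ (histList p n)) →
      (⋂ n : ℕ, closedBall ((p n).getLastD c) (β ^ ((n + 1) * k) * ρ)) ⊆ S) :
    ∃ p : ℕ → List X, (∀ n, p n ∈ τ (histList p n)) ∧
      ∃ᶠ N in atTop, (β ^ (N * k) * ρ) ^ s < playWeight τ (histList p N) := by
  choose next hnc hnp hnl hnw using fun u : {h // IsConsistent τ h} =>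
    hv.exists_heavy_extension hD hβ hρ hk hT hs hS hlim u.2 (u.1.length + 1)
  let f : ℕ → {h // IsConsistent τ h} := fun n => (fun u => ⟨next u, hnc u⟩)^[n] ⟨[], .nil⟩
  have hf : ∀ n, (f (n + 1)).1 = next (f n) := fun n => by
    simp only [f, Function.iterate_succ_apply']
  have hlt : ∀ n, (f n).1.length < (f (n + 1)).1.length := fun n => by
    rw [hf]
    exact hnl (f n)
  obtain ⟨p, hp, hpf⟩ := exists_play_of_seq (fun n => (f n).1) (fun n => (f n).2)
    (fun n => by rw [hf]; exact hnp (f n)) hlt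
  refine ⟨p, hp, frequently_atTop.2 fun N => ⟨(f (N + 1)).1.length, ?_, ?_⟩⟩
  · exact N.le_succ.trans (strictMono_nat_of_lt_succ hlt).le_apply
  · rw [hpf (N + 1), hf]
    exact hnw (f N)

end Core

/-- A play whose weight exceeds the `s`-th power of the radius infinitely often has payoff at
most `s`. -/
lemma liminf_le_of_frequently_heavy {β ρ : ℝ} {k : ℕ} (hβ : β ∈ Set.Ioo (0 : ℝ) 1)
    (hρ : 0 < ρ) (hk : 1 ≤ k) {Y : Type*} {τ : List (List Y) → Set (List Y)} {s : ℝ}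
    {p : ℕ → List Y}
    (hheavy : ∃ᶠ N in atTop, (β ^ (N * k) * ρ) ^ s < playWeight τ (histList p N)) :
    Filter.liminf (fun N : ℕ => (1 / (N : ℝ)) * ∑ n ∈ Finset.range N,
      Real.log ((τ (histList p n)).ncard) / (k * Real.log (1 / β))) Filter.atTop ≤ s := by
  have hβ0 := hβ.1
  have hL : 0 < k * Real.log (1 / β) := by
    have := Real.log_pos ((one_lt_div hβ0).2 hβ.2)
    have : (0 : ℝ) < k := by exact_mod_cast hk
    positivity
  set L := k * Real.log (1 / β) with hLdef
  by_contra! hlt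
  obtain ⟨s', hs', hs''⟩ := exists_between hlt
  have hev := eventually_lt_of_lt_liminf hs'' (isBoundedUnder_of ⟨0, fun N => by positivity⟩)
  have hlarge : ∀ᶠ N : ℕ in atTop, -(s * Real.log ρ) < (s' - s) * L * N :=
    (tendsto_natCast_atTop_atTop.const_mul_atTop
      (mul_pos (sub_pos.2 hs') hL)).eventually_gt_atTop _
  obtain ⟨N, hN, hav, hbig, hN0⟩ :=
    (hheavy.and_eventually (hev.and (hlarge.and (eventually_gt_atTop 0)))).exists
  have hN0' : (0 : ℝ) < N := by exact_mod_cast hN0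
  have hlog := Real.log_lt_log (by positivity) hN
  rw [← Finset.sum_div, one_div_mul_eq_div, lt_div_iff₀ hN0', lt_div_iff₀ hL] at hav
  have hprod : Real.log (playWeight τ (histList p N)) =
      -∑ n ∈ Finset.range N, Real.log ((τ (histList p n)).ncard) := by
    have hw : 0 < playWeight τ (histList p N) := lt_trans (by positivity) hN
    rw [playWeight_histList] at hw ⊢
    rw [Real.log_prod fun i hi => Finset.prod_ne_zero_iff.1 hw.ne' i hi]
    simp [Real.log_inv]
  have hrad : Real.log ((β ^ (N * k) * ρ) ^ s) = s * (-(N * L) + Real.log ρ) := by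
    rw [Real.log_rpow (by positivity), Real.log_mul (by positivity) hρ.ne', Real.log_pow, hLdef,
      one_div, Real.log_inv]
    push_cast
    ring
  rw [hprod, hrad] at hlog
  nlinarith

/-- Upper bound on the value of the non-overlapping dimension game: if Player 1 has a pure
strategy guaranteeing `δ` in the non-overlapping Hausdorff dimension game associated with a
`(β,β)`-Schmidt subgame with target set `S`, then `dim_H S ≥ δ`. -/
theorem dimH_ge_of_player1_guarantees [CompleteSpace X] (D : ℕ) (hD : IsDoublingWith X D)
    (β : ℝ) (hβ : β ∈ Set.Ioo (0 : ℝ) 1) (S : Set X)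
    (ι : Type*) [Nonempty ι] (c : ι → X) (r : ι → ℝ) (hr : ∀ i, 0 < r i)
    (T : ι → Set (List X)) (hT : ∀ i, IsBetaSchmidtTree β (c i) (r i) (T i))
    (δ : ℝ)
    (hstrat : ∃ (i : ι) (k : ℕ), 1 ≤ k ∧ ∃ τ : List (List X) → Set (List X),
      Valid1 β (c i) (r i) (T i) k τ ∧ Guarantees1 β (c i) (r i) S k τ δ) :
    ENNReal.ofReal δ ≤ dimH S := by
  obtain ⟨i, k, hk, τ, hv, hg⟩ := hstrat
  by_contra! hlt
  borelize X
  obtain ⟨s, hs, hsδ⟩ := ENNReal.lt_iff_exists_nnreal_btwn.1 hlt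
  have hs0 : (0 : ℝ) < s := by exact_mod_cast zero_le.trans_lt hs
  have hsδ' : (s : ℝ) < δ := by
    rwa [← ENNReal.ofReal_coe_nnreal, ENNReal.ofReal_lt_ofReal_iff_of_nonneg hs0.le] at hsδ
  have hlim : ∀ p : ℕ → List X, (∀ n, p n ∈ τ (histList p n)) →
      (⋂ n : ℕ, closedBall ((p n).getLastD (c i)) (β ^ ((n + 1) * k) * r i)) ⊆ S := by
    intro p hp
    by_contra hcon
    have := hg p hp
    rw [if_neg hcon] at this
    linarith
  obtain ⟨p, hp, hheavy⟩ := hv.exists_play_frequently_heavy hD hβ (hr i) hk (hT i) hs0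
    (hausdorffMeasure_of_dimH_lt hs) hlim
  have h1 := hg p hp
  rw [if_pos (hlim p hp)] at h1
  exact (h1.trans (liminf_le_of_frequently_heavy hβ (hr i) hk hheavy)).not_gt hsδ'
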